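/- For real numbers λ ≥ 0 and σ ≤ 0, define g(λ,σ) as follows: if σ² − 4λ > 0, g(λ,σ) = (sinh(a)/a)·e^σ with a = √(σ² − 4λ); if σ² − 4λ < 0, g(λ,σ) = (sin(a)/a)·e^σ with a = √(4λ − σ²); and if σ² = 4λ, g(λ,σ) = e^σ. Then |g(λ,σ)| ≤ 1 for all λ ≥ 0 and σ ≤ 0. -/

import Mathlib

/-!
Since `1 - e^(-2x) ≤ 2x`, we have `sinh x ≤ x e^x`, so the quotient `sinh a / a` is at most `e^a`
for `a > 0`, while `|sin a / a| ≤ 1`. Hence `|g(λ,σ)| ≤ e^(a + σ)` in the hyperbolic case and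
`|g(λ,σ)| ≤ e^σ` in the others. When `λ ≥ 0` and `σ ≤ 0`, the exponent `a + σ` is nonpositive
because `a = √(σ² - 4λ) ≤ √(σ²) = -σ`.
-/

/-- The function `g(λ,σ)` of the paper: `(sinh a / a)·e^σ` with `a = √(σ² − 4λ)` when
`σ² − 4λ > 0`, `(sin a / a)·e^σ` with `a = √(4λ − σ²)` when `σ² − 4λ < 0`, and `e^σ`
when `σ² = 4λ`. -/
noncomputable def gFun (lam sig : ℝ) : ℝ :=
  if 0 < sig ^ 2 - 4 * lam then
    Real.sinh (Real.sqrt (sig ^ 2 - 4 * lam)) / Real.sqrt (sig ^ 2 - 4 * lam) * Real.exp sig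
  else if sig ^ 2 - 4 * lam < 0 then
    Real.sin (Real.sqrt (4 * lam - sig ^ 2)) / Real.sqrt (4 * lam - sig ^ 2) * Real.exp sig
  else Real.exp sig

theorem sinh_le_self_mul_exp (x : ℝ) : Real.sinh x ≤ x * Real.exp x := by
  have one_sub_exp_le : 1 - Real.exp (-(2 * x)) ≤ 2 * x := by
    linarith [Real.add_one_le_exp (-(2 * x))]
  calc Real.sinh x
    _ = (1 - Real.exp (-(2 * x))) / 2 * Real.exp x := by
      have exp_neg_eq : Real.exp (-x) = Real.exp (-(2 * x)) * Real.exp x := by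
        rw [← Real.exp_add]
        ring_nf
      rw [Real.sinh_eq, exp_neg_eq]
      ring
    _ ≤ x * Real.exp x := by
      gcongr
      linarith

theorem abs_sinh_div_self_le_exp_abs (x : ℝ) : |Real.sinh x / x| ≤ Real.exp |x| := by
  rw [abs_div, Real.abs_sinh]
  exact div_le_of_le_mul₀ (abs_nonneg x) (Real.exp_nonneg _)
    ((sinh_le_self_mul_exp |x|).trans_eq (mul_comm _ _))

theorem gFun_of_four_mul_lt_sq {lam sig : ℝ} (h : 4 * lam < sig ^ 2) :
    gFun lam sig =
      Real.sinh √(sig ^ 2 - 4 * lam) / √(sig ^ 2 - 4 * lam) * Real.exp sig :=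
  if_pos (sub_pos.mpr h)

theorem gFun_of_sq_le_four_mul {lam sig : ℝ} (h : sig ^ 2 ≤ 4 * lam) :
    gFun lam sig = Real.sinc √(4 * lam - sig ^ 2) * Real.exp sig := by
  rw [gFun, if_neg (sub_nonpos.mpr h).not_gt]
  rcases h.lt_or_eq with h_lt | h_eq
  · rw [if_pos (sub_neg.mpr h_lt),
      Real.sinc_of_ne_zero (Real.sqrt_pos.mpr (sub_pos.mpr h_lt)).ne']
  · simp [h_eq]

-- If `σ² ≤ 4λ`, then `√(σ² - 4λ) = 0` in Lean, so the bound reads `e^σ`.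
theorem abs_gFun_le_exp (lam sig : ℝ) :
    |gFun lam sig| ≤ Real.exp (√(sig ^ 2 - 4 * lam) + sig) := by
  rw [Real.exp_add]
  rcases lt_or_ge (4 * lam) (sig ^ 2) with h_hyp | h_ell
  · rw [gFun_of_four_mul_lt_sq h_hyp, abs_mul, Real.abs_exp]
    gcongr
    simpa only [abs_of_nonneg (Real.sqrt_nonneg _)] using
      abs_sinh_div_self_le_exp_abs √(sig ^ 2 - 4 * lam)
  · rw [gFun_of_sq_le_four_mul h_ell, abs_mul, Real.abs_exp,
      Real.sqrt_eq_zero_of_nonpos (sub_nonpos.mpr h_ell), Real.exp_zero]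
    gcongr
    exact Real.abs_sinc_le_one _

/-- `|g(λ,σ)| ≤ 1` for all `λ ≥ 0` and `σ ≤ 0`. -/
theorem abs_gFun_le_one (lam sig : ℝ) (hlam : 0 ≤ lam) (hsig : sig ≤ 0) :
    |gFun lam sig| ≤ 1 := by
  have sqrt_le_neg : √(sig ^ 2 - 4 * lam) ≤ -sig :=
    calc √(sig ^ 2 - 4 * lam)
      _ ≤ √(sig ^ 2) := Real.sqrt_le_sqrt (by linarith)
      _ = -sig := by rw [Real.sqrt_sq_eq_abs, abs_of_nonpos hsig]
  calc |gFun lam sig|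
    _ ≤ Real.exp (√(sig ^ 2 - 4 * lam) + sig) := abs_gFun_le_exp lam sig
    _ ≤ 1 := Real.exp_le_one_iff.mpr (by linarith)
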